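/- arXiv:math/0610370 — 3 statements merged into one kernel-verified Lean document; each statement's English description precedes it below -/
import Mathlib

section
/- Let j₀ = [[0,−1],[1,0]] and let j = g · j₀ · g⁻¹ for some 2×2 real matrix g with det g > 0. Then the matrix σ = I − j·j₀ satisfies: (i) j · σ = σ · j₀, and (ii) det σ > 0, so σ ∈ GL⁺(2,ℝ). (Thus σ(γ) = 1 − j j₀ defines a canonical section of the principal GL(1,ℂ)-bundle GL⁺(2,ℝ) → D.) -/
/-- A conjugate of `j₀` by a matrix of positive determinant is traceless of determinant one, with
lower left entry and negated upper right entry nonnegative. -/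
theorem exists_conj_complexStructure_eq (g : Matrix (Fin 2) (Fin 2) ℝ) (hg : 0 < g.det) :
    ∃ p q r : ℝ, 0 ≤ q ∧ 0 ≤ r ∧ q * r - p ^ 2 = 1 ∧
      g * !![0, -1; 1, 0] * g⁻¹ = !![p, -q; r, -p] := by
  have hdet := Matrix.det_fin_two g
  refine ⟨(g 0 0 * g 1 0 + g 0 1 * g 1 1) / g.det, (g 0 0 ^ 2 + g 0 1 ^ 2) / g.det,
    (g 1 0 ^ 2 + g 1 1 ^ 2) / g.det, by positivity, by positivity, ?_, ?_⟩
  · field_simp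
    rw [hdet]
    ring
  · rw [Matrix.inv_def, Ring.inverse_eq_inv', Matrix.adjugate_fin_two]
    ext i k
    fin_cases i <;> fin_cases k <;> simp [Matrix.mul_apply, Fin.sum_univ_two] <;> ring

/-- For `j = g j₀ g⁻¹` with `det g > 0`, the matrix `σ = 1 - j j₀` satisfies
`j σ = σ j₀` and `det σ > 0`, i.e. `σ ∈ GL⁺(2,ℝ)`.  (This is the canonical section
`σ(γ) = 1 - j j₀` of the bundle `GL⁺(2,ℝ) → D`.) -/
theorem stmt8 (g : Matrix (Fin 2) (Fin 2) ℝ) (hg : 0 < g.det) :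
    (g * !![0, -1; 1, 0] * g⁻¹) * (1 - (g * !![0, -1; 1, 0] * g⁻¹) * !![0, -1; 1, 0]) =
      (1 - (g * !![0, -1; 1, 0] * g⁻¹) * !![0, -1; 1, 0]) * !![0, -1; 1, 0] ∧
    0 < (1 - (g * !![0, -1; 1, 0] * g⁻¹) * !![0, -1; 1, 0]).det := by
  obtain ⟨p, q, r, hq, hr, h, hj⟩ := exists_conj_complexStructure_eq g hg
  rw [hj]
  constructor
  · ext i k
    fin_cases i <;> fin_cases k <;> simp [Matrix.mul_apply, Fin.sum_univ_two] <;> linarith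
  · simp only [Matrix.det_fin_two, Matrix.sub_apply, Matrix.mul_apply, Fin.sum_univ_two]
    simp
    linarith
end

section
/- Let L be a Banach space and W a normed real vector space. Let Q : L → W be a bounded linear map with operator norm at most C, let N : W → L satisfy N(0) = 0 and ‖N(ξ₁) − N(ξ₂)‖ ≤ C₀·(‖ξ₁‖ + ‖ξ₂‖)·‖ξ₁ − ξ₂‖ for all ξ₁, ξ₂ ∈ W, and let e ∈ L with ‖e‖ ≤ ε. Assume δ > 0, C₀·C²·δ < 1/4 and 2ε ≤ δ. Then there exists a unique η in the closed ball {η ∈ L : ‖η‖ ≤ δ} satisfying η + e + N(Q·η) = 0, and this η moreover satisfies ‖η‖ ≤ 2ε. (This is the contraction-mapping construction of the correction term f(u) solving the perturbed ∂̄-equation ∂̄u + η + N_u(Q_u η) = 0.) -/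
/-- Precomposing a quadratic-type nonlinearity with a bounded linear map of norm `≤ C`
multiplies its constant by `C ^ 2`. -/
theorem norm_comp_sub_le_of_quadratic {L W : Type*} [NormedAddCommGroup L] [NormedSpace ℝ L]
    [NormedAddCommGroup W] [NormedSpace ℝ W] {C C₀ : ℝ} (hC₀ : 0 ≤ C₀)
    {Q : L →L[ℝ] W} (hQ : ‖Q‖ ≤ C) {N : W → L}
    (hN : ∀ ξ₁ ξ₂ : W, ‖N ξ₁ - N ξ₂‖ ≤ C₀ * (‖ξ₁‖ + ‖ξ₂‖) * ‖ξ₁ - ξ₂‖) (x y : L) :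
    ‖N (Q x) - N (Q y)‖ ≤ C₀ * C ^ 2 * (‖x‖ + ‖y‖) * ‖x - y‖ := by
  have hC : 0 ≤ C := (norm_nonneg Q).trans hQ
  calc ‖N (Q x) - N (Q y)‖ ≤ C₀ * (‖Q x‖ + ‖Q y‖) * ‖Q (x - y)‖ := by
        simpa only [map_sub] using hN (Q x) (Q y)
    _ ≤ C₀ * (C * ‖x‖ + C * ‖y‖) * (C * ‖x - y‖) := by
        gcongr <;> exact Q.le_of_opNorm_le hQ _
    _ = C₀ * C ^ 2 * (‖x‖ + ‖y‖) * ‖x - y‖ := by ring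

/-- Contraction-mapping construction of the correction term solving the perturbed
`∂̄`-equation `η + e + N(Qη) = 0`: if `Q` is a bounded linear map of norm `≤ C`, `N` is a
quadratic-type nonlinearity with constant `C₀`, `‖e‖ ≤ ε`, `δ > 0`, `C₀ C² δ < 1/4` and
`2ε ≤ δ`, then there is a unique `η` in the closed `δ`-ball with `η + e + N(Qη) = 0`, and
moreover `‖η‖ ≤ 2ε`. -/
theorem stmt11 {L W : Type*} [NormedAddCommGroup L] [NormedSpace ℝ L] [CompleteSpace L]
    [NormedAddCommGroup W] [NormedSpace ℝ W]
    (C C₀ ε δ : ℝ) (hC : 0 ≤ C) (hC₀ : 0 ≤ C₀) (hε : 0 ≤ ε)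
    (Q : L →L[ℝ] W) (hQ : ‖Q‖ ≤ C)
    (N : W → L) (hN0 : N 0 = 0)
    (hN : ∀ ξ₁ ξ₂ : W, ‖N ξ₁ - N ξ₂‖ ≤ C₀ * (‖ξ₁‖ + ‖ξ₂‖) * ‖ξ₁ - ξ₂‖)
    (e : L) (he : ‖e‖ ≤ ε)
    (hδ : 0 < δ) (h1 : C₀ * C ^ 2 * δ < 1 / 4) (h2 : 2 * ε ≤ δ) :
    ∃ η : L, ‖η‖ ≤ δ ∧ η + e + N (Q η) = 0 ∧ ‖η‖ ≤ 2 * ε ∧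
      ∀ η' : L, ‖η'‖ ≤ δ → η' + e + N (Q η') = 0 → η' = η := by
  have half_lipschitz : ∀ x y : L, ‖x‖ ≤ δ → ‖y‖ ≤ δ →
      ‖N (Q x) - N (Q y)‖ ≤ 1 / 2 * ‖x - y‖ := fun x y hx hy =>
    calc ‖N (Q x) - N (Q y)‖ ≤ C₀ * C ^ 2 * (‖x‖ + ‖y‖) * ‖x - y‖ :=
          norm_comp_sub_le_of_quadratic hC₀ hQ hN x y
      _ ≤ C₀ * C ^ 2 * (δ + δ) * ‖x - y‖ := by gcongr
      _ ≤ 1 / 2 * ‖x - y‖ := by gcongr; linarith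
  have half_bound : ∀ x : L, ‖x‖ ≤ δ → ‖N (Q x)‖ ≤ 1 / 2 * ‖x‖ := fun x hx => by
    simpa [hN0] using half_lipschitz x 0 hx (by simpa using hδ.le)
  let T : L → L := fun x => -(e + N (Q x))
  have norm_T_le : ∀ x : L, ‖x‖ ≤ δ → ‖T x‖ ≤ ε + 1 / 2 * ‖x‖ := fun x hx => by
    rw [norm_neg]
    exact (norm_add_le _ _).trans (add_le_add he (half_bound x hx))
  have mapsTo_T : Set.MapsTo T (Metric.closedBall 0 δ) (Metric.closedBall 0 δ) := by
    intro x hx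
    rw [mem_closedBall_zero_iff] at hx ⊢
    linarith [norm_T_le x hx]
  have contracting_T : ContractingWith (1 / 2) (mapsTo_T.restrict T _ _) := by
    refine ⟨by rw [← NNReal.coe_lt_coe]; norm_num, LipschitzWith.of_dist_le_mul ?_⟩
    rintro ⟨x, hx⟩ ⟨y, hy⟩
    rw [mem_closedBall_zero_iff] at hx hy
    simpa [Subtype.dist_eq, T, ← dist_eq_norm, -neg_add_rev] using half_lipschitz x y hx hy
  obtain ⟨η, hη, hfix, -⟩ := contracting_T.exists_fixedPoint' Metric.isClosed_closedBall.isComplete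
    mapsTo_T (Metric.mem_closedBall_self hδ.le) (edist_ne_top _ _)
  rw [mem_closedBall_zero_iff] at hη
  have hηT : T η = η := hfix
  have hsol : η + e + N (Q η) = 0 := by
    rw [add_assoc]
    exact eq_neg_iff_add_eq_zero.1 hηT.symm
  refine ⟨η, hη, hsol, ?_, fun η' hη' hsol' => ?_⟩
  · have := norm_T_le η hη
    rw [hηT] at this
    linarith
  · have hdiff : η' - η = -(N (Q η') - N (Q η)) := by
      rw [add_assoc] at hsol hsol'
      calc η' - η = -(e + N (Q η')) - -(e + N (Q η)) :=
            congrArg₂ _ (eq_neg_of_add_eq_zero_left hsol') (eq_neg_of_add_eq_zero_left hsol)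
        _ = -(N (Q η') - N (Q η)) := by abel
    have := half_lipschitz η' η hη' hη
    rw [← norm_neg, ← hdiff] at this
    exact sub_eq_zero.1 (norm_le_zero_iff.1 (by linarith))
end

section
/- Let L be a Banach space and W a normed real vector space, Q : L → W a bounded linear map with operator norm at most C, N : W → L with N(0) = 0 and ‖N(ξ₁) − N(ξ₂)‖ ≤ C₀·(‖ξ₁‖ + ‖ξ₂‖)·‖ξ₁ − ξ₂‖ for all ξ₁, ξ₂, and e ∈ L with ‖e‖ ≤ ε. Assume δ > 0, C₀·C²·δ < 1/4 and 2ε ≤ δ, and define H : L → L by H(η) = −e − N(Q·η). Then: (i) ‖H(η)‖ ≤ δ whenever ‖η‖ ≤ δ; (ii) ‖H(η₁) − H(η₂)‖ ≤ (1/2)·‖η₁ − η₂‖ whenever ‖η₁‖, ‖η₂‖ ≤ δ; and (iii) ‖H(η)‖ ≤ 2ε whenever ‖η‖ ≤ 2ε. Hence H is a contraction mapping of the closed δ-ball preserving the closed 2ε-ball. -/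
/-- The map `H(η) = -e - N(Qη)` is a contraction of the closed `δ`-ball preserving the
closed `2ε`-ball: (i) it maps the `δ`-ball to itself, (ii) it is `1/2`-Lipschitz on the
`δ`-ball, (iii) it maps the `2ε`-ball to itself. -/
theorem stmt12 {L W : Type*} [NormedAddCommGroup L] [NormedSpace ℝ L] [CompleteSpace L]
    [NormedAddCommGroup W] [NormedSpace ℝ W]
    (C C₀ ε δ : ℝ) (hC : 0 ≤ C) (hC₀ : 0 ≤ C₀) (hε : 0 ≤ ε)
    (Q : L →L[ℝ] W) (hQ : ‖Q‖ ≤ C)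
    (N : W → L) (hN0 : N 0 = 0)
    (hN : ∀ ξ₁ ξ₂ : W, ‖N ξ₁ - N ξ₂‖ ≤ C₀ * (‖ξ₁‖ + ‖ξ₂‖) * ‖ξ₁ - ξ₂‖)
    (e : L) (he : ‖e‖ ≤ ε)
    (hδ : 0 < δ) (h1 : C₀ * C ^ 2 * δ < 1 / 4) (h2 : 2 * ε ≤ δ) :
    (∀ η : L, ‖η‖ ≤ δ → ‖-e - N (Q η)‖ ≤ δ) ∧
    (∀ η₁ η₂ : L, ‖η₁‖ ≤ δ → ‖η₂‖ ≤ δ →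
      ‖(-e - N (Q η₁)) - (-e - N (Q η₂))‖ ≤ (1 / 2) * ‖η₁ - η₂‖) ∧
    (∀ η : L, ‖η‖ ≤ 2 * ε → ‖-e - N (Q η)‖ ≤ 2 * ε) := by
  have hQη (η : L) : ‖Q η‖ ≤ C * ‖η‖ := Q.le_of_opNorm_le hQ η
  have hLip (η₁ η₂ : L) (h₁ : ‖η₁‖ ≤ δ) (h₂ : ‖η₂‖ ≤ δ) :
      ‖N (Q η₁) - N (Q η₂)‖ ≤ (1 / 2) * ‖η₁ - η₂‖ :=
    calc ‖N (Q η₁) - N (Q η₂)‖ ≤ C₀ * (‖Q η₁‖ + ‖Q η₂‖) * ‖Q η₁ - Q η₂‖ := hN _ _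
      _ ≤ C₀ * (C * δ + C * δ) * (C * ‖η₁ - η₂‖) := by
        rw [← map_sub]
        gcongr
        · exact (hQη η₁).trans (by gcongr)
        · exact (hQη η₂).trans (by gcongr)
        · exact hQη _
      _ = 2 * (C₀ * C ^ 2 * δ) * ‖η₁ - η₂‖ := by ring
      _ ≤ (1 / 2) * ‖η₁ - η₂‖ := by
        gcongr
        linarith
  have hH (η : L) (h : ‖η‖ ≤ δ) : ‖-e - N (Q η)‖ ≤ ε + (1 / 2) * ‖η‖ := by
    have hNη : ‖N (Q η)‖ ≤ (1 / 2) * ‖η‖ := by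
      simpa [hN0] using hLip η 0 h (by simpa using hδ.le)
    calc ‖-e - N (Q η)‖ ≤ ‖-e‖ + ‖N (Q η)‖ := norm_sub_le _ _
      _ ≤ ε + (1 / 2) * ‖η‖ := by
        rw [norm_neg]
        gcongr
  refine ⟨fun η h => ?_, fun η₁ η₂ h₁ h₂ => ?_, fun η h => ?_⟩
  · linarith [hH η h]
  · rw [sub_sub_sub_cancel_left, norm_sub_rev]
    exact hLip η₁ η₂ h₁ h₂
  · linarith [hH η (h.trans h2)]
end
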